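/- arXiv:2102.09726 — 4 statements merged into one kernel-verified Lean document; each statement's English description precedes it below -/
import Mathlib

section
/- Let n ≥ 1, ℓ ≥ 2, let Y_0, …, Y_ℓ be n×n complex matrices, and let P(z) = Σ_{k=0}^ℓ Y_k B_k^ℓ(z), a matrix polynomial of grade ℓ written in the Bernstein basis (note P(1) = Y_ℓ). Let L_B(z) be the ℓ×ℓ block pencil with n×n blocks: block (1,1) equal to (z/ℓ)·Y_ℓ + (1−z)·Y_{ℓ−1}, block (1,j) equal to (1−z)·Y_{ℓ−j} for 2 ≤ j ≤ ℓ, block (i,i−1) equal to (z−1)·I_n and block (i,i) equal to (i/(ℓ−i+1))·z·I_n for 2 ≤ i ≤ ℓ, and all other blocks 0. If Y_ℓ = P(1) is invertible, then there exist unimodular matrix polynomials E(z) and F(z) over ℂ[z] of size nℓ such that E(z)·L_B(z)·F(z) = diag(P(z), I_n, …, I_n); that is, L_B(z) is a linearization of P(z). -/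
open Polynomial

open Matrix

/-- Scalar matrix with first row `u` and the remaining rows those of the pencil. -/
noncomputable def bpG (m : ℕ) (u : Fin (m + 1) → ℂ[X]) : Matrix (Fin (m + 1)) (Fin (m + 1)) ℂ[X] :=
  Matrix.of fun i j =>
    if i.val = 0 then u j
    else if j.val + 1 = i.val then X - 1
    else if j = i then C (((i.val + 1 : ℕ) : ℂ) / ((m + 1 - i.val : ℕ) : ℂ)) * X
    else 0

/-- The null vector of the lower rows. -/
noncomputable def bpV (m : ℕ) (j : Fin (m + 1)) : ℂ[X] :=
  C ((Nat.choose (m + 1) (j.val + 1) : ℕ) : ℂ) * X ^ (m - j.val) * (1 - X) ^ j.val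

theorem bp_exists_u (m : ℕ) : ∃ u : Fin (m + 1) → ℂ[X], u ⬝ᵥ bpV m = 1 := by
  have h : IsCoprime (bpV m 0) (bpV m (Fin.last m)) := by
    have h1 : IsCoprime (X : ℂ[X]) (1 - X) := ⟨1, 1, by ring⟩
    have h2 : IsCoprime ((X : ℂ[X]) ^ m) ((1 - X) ^ m) := h1.pow
    have h3 : IsUnit (C ((m : ℂ) + 1)) :=
      Polynomial.isUnit_C.2 (IsUnit.mk0 _ (by exact_mod_cast Nat.succ_ne_zero m))
    have := (isCoprime_mul_unit_left_left h3 _ _).2 h2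
    simpa [bpV] using this
  obtain ⟨a, b, hab⟩ := h
  refine ⟨Pi.single 0 a + Pi.single (Fin.last m) b, ?_⟩
  rw [add_dotProduct, single_dotProduct, single_dotProduct, hab]

theorem bp_mulVec (m : ℕ) (u : Fin (m + 1) → ℂ[X]) (hu : u ⬝ᵥ bpV m = 1) :
    bpG m u *ᵥ bpV m = Pi.single 0 1 := by
  funext i
  refine Fin.cases ?_ (fun i' => ?_) i
  · simpa [Matrix.mulVec, bpG, dotProduct] using hu
  · have hi := i'.isLt
    have hG : ∀ j, bpG m u i'.succ j = (if j = i'.castSucc then X - 1 else 0) +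
        (if j = i'.succ then
          C (((i'.val + 1 + 1 : ℕ) : ℂ) / ((m - i'.val : ℕ) : ℂ)) * X else 0) := by
      intro j
      have e1 : (j = i'.castSucc) ↔ j.val = i'.val := by simp [Fin.ext_iff]
      have e2 : (j = i'.succ) ↔ j.val = i'.val + 1 := by simp [Fin.ext_iff]
      simp only [bpG, Matrix.of_apply, e1, e2, Fin.val_succ, Nat.add_sub_add_right]
      by_cases h1 : j.val = i'.val
      · simp [h1]
      · simp [h1]
    have hc := Nat.choose_succ_right_eq (m + 1) (i'.val + 1)
    rw [Nat.add_sub_add_right] at hc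
    have hne : ((m - i'.val : ℕ) : ℂ) ≠ 0 := by
      exact_mod_cast (by omega : m - i'.val ≠ 0)
    have hc' : (C (((i'.val + 1 + 1 : ℕ) : ℂ) / ((m - i'.val : ℕ) : ℂ)) : ℂ[X]) *
        C ((Nat.choose (m + 1) (i'.val + 1 + 1) : ℕ) : ℂ) =
        C ((Nat.choose (m + 1) (i'.val + 1) : ℕ) : ℂ) := by
      rw [← C_mul]
      congr 1
      have : ((Nat.choose (m + 1) (i'.val + 1 + 1) : ℕ) : ℂ) * ((i'.val + 1 + 1 : ℕ) : ℂ) =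
        ((Nat.choose (m + 1) (i'.val + 1) : ℕ) : ℂ) * ((m - i'.val : ℕ) : ℂ) := by
        exact_mod_cast hc
      rw [div_mul_eq_mul_div, div_eq_iff hne, mul_comm, this]
    have hp : (X : ℂ[X]) ^ (m - i'.val) = X * X ^ (m - (i'.val + 1)) := by
      rw [← pow_succ']
      congr 1
      omega
    rw [Pi.single_eq_of_ne (Fin.succ_ne_zero i')]
    simp only [Matrix.mulVec, dotProduct, hG, add_mul, Finset.sum_add_distrib, ite_mul, zero_mul,
      Finset.sum_ite_eq', Finset.sum_ite_eq, Finset.mem_univ, if_true]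
    simp only [bpV, Fin.val_succ, Fin.val_castSucc]
    rw [hp, pow_succ, ← hc']
    ring

theorem bp_isUnit_det (m : ℕ) (u : Fin (m + 1) → ℂ[X]) (hu : u ⬝ᵥ bpV m = 1) :
    IsUnit (bpG m u).det := by
  have h := congrFun (Matrix.cramer_eq_adjugate_mulVec (bpG m u) (bpG m u *ᵥ bpV m)) 0
  rw [Matrix.mulVec_mulVec, Matrix.adjugate_mul, Matrix.cramer_apply, bp_mulVec m u hu,
    Matrix.smul_mulVec, Matrix.one_mulVec, Matrix.det_succ_column_zero] at h
  rw [Fin.sum_univ_succ] at h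
  have h0 : ((bpG m u).updateCol 0 (Pi.single 0 1)).submatrix (Fin.succAbove 0) Fin.succ =
      (bpG m u).submatrix Fin.succ Fin.succ := by
    ext i j
    simp [Matrix.updateCol_apply]
  have hd : ((bpG m u).submatrix Fin.succ Fin.succ).det =
      ∏ i : Fin m, (C (((i.val + 1 + 1 : ℕ) : ℂ) / ((m - i.val : ℕ) : ℂ)) * X) := by
    rw [Matrix.det_of_lowerTriangular]
    · refine Finset.prod_congr rfl fun i _ => ?_
      simp [bpG]
    · intro i j hij
      have hij' : i < j := hij
      have : i.val < j.val := hij'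
      simp only [bpG, Matrix.submatrix_apply, Matrix.of_apply, Fin.val_succ]
      rw [if_neg (by omega), if_neg (by omega), if_neg (by simp [Fin.ext_iff]; omega)]
  rw [h0, hd, Finset.prod_mul_distrib, ← map_prod] at h
  simp only [Matrix.updateCol_self, Fin.val_zero, pow_zero, Pi.single_eq_same, one_mul, ne_eq,
    Fin.succ_ne_zero, not_false_eq_true, Pi.single_eq_of_ne, mul_zero, zero_mul,
    Finset.sum_const_zero, add_zero, Finset.prod_const, Finset.card_univ, Fintype.card_fin,
    Pi.smul_apply, smul_eq_mul, bpV, mul_one, tsub_zero] at h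
  rw [← mul_assoc] at h
  have h2 := mul_right_cancel₀ (pow_ne_zero m (X_ne_zero (R := ℂ))) h
  have h3 : IsUnit ((bpG m u).det * C ((Nat.choose (m + 1) (0 + 1) : ℕ) : ℂ)) := by
    rw [← h2]
    refine Polynomial.isUnit_C.2 (IsUnit.mk0 _ (Finset.prod_ne_zero_iff.2 fun i _ => ?_))
    have := i.isLt
    refine div_ne_zero ?_ ?_
    · exact_mod_cast (by omega : i.val + 1 + 1 ≠ 0)
    · exact_mod_cast (by omega : m - i.val ≠ 0)
  exact isUnit_of_mul_isUnit_left h3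

theorem bp_sum (m : ℕ) (y : ℕ → ℂ) :
    ∑ k ∈ Finset.range (m + 1 + 1),
      (C ((Nat.choose (m + 1) k : ℂ)) * X ^ k * (1 - X) ^ (m + 1 - k)) * C (y k) =
    ∑ k : Fin (m + 1), (if k.val = 0 then
        (C (((m + 1 : ℕ) : ℂ))⁻¹ * X) * C (y (m + 1)) + (1 - X) * C (y m)
        else (1 - X) * C (y (m - k.val))) * bpV m k := by
  have h1 : ∀ k : Fin (m + 1), (if k.val = 0 then
        (C (((m + 1 : ℕ) : ℂ))⁻¹ * X) * C (y (m + 1)) + (1 - X) * C (y m)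
        else (1 - X) * C (y (m - k.val))) * bpV m k =
      (if k = 0 then (C (((m + 1 : ℕ) : ℂ))⁻¹ * X) * C (y (m + 1)) * bpV m 0 else 0) +
        (1 - X) * C (y (m - k.val)) * bpV m k := by
    intro k
    by_cases hk : k = 0
    · subst hk
      simp [add_mul]
    · have : k.val ≠ 0 := fun h => hk (Fin.ext h)
      simp [hk]
  simp_rw [h1]
  rw [Finset.sum_add_distrib, Finset.sum_ite_eq' Finset.univ, if_pos (Finset.mem_univ _),
    ← Finset.sum_range_reflect, Finset.sum_range_succ']
  refine Eq.trans (add_comm _ _) (congrArg₂ (fun a b => a + b) ?_ ?_)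
  · have : (C (((m + 1 : ℕ) : ℂ))⁻¹ : ℂ[X]) * C (((m + 1 : ℕ) : ℂ)) = 1 := by
      rw [← C_mul, inv_mul_cancel₀ (by exact_mod_cast Nat.succ_ne_zero m), C_1]
    simp only [bpV, Fin.val_zero, zero_add, Nat.choose_one_right, Nat.add_sub_cancel, Nat.sub_zero,
      Nat.choose_self, Nat.sub_self, pow_zero, mul_one, Nat.cast_one, C_1, one_mul]
    linear_combination (-(X ^ (m + 1) * C (y (m + 1)))) * this
  · rw [Finset.sum_range]
    refine Finset.sum_congr rfl fun k _ => ?_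
    have hk := k.isLt
    have e1 : m + 1 + 1 - 1 - (k.val + 1) = m - k.val := by omega
    have e2 : m + 1 - (m - k.val) = k.val + 1 := by omega
    have e3 : Nat.choose (m + 1) (m - k.val) = Nat.choose (m + 1) (k.val + 1) :=
      Nat.choose_symm_of_eq_add (by omega)
    rw [e1, e2, e3, bpV]
    ring

theorem bp_unimod {ι : Type*} [Fintype ι] [DecidableEq ι] (A : Matrix ι ι ℂ[X])
    (h : IsUnit A.det) : ∃ c : ℂ, c ≠ 0 ∧ A.det = C c := by
  obtain ⟨c, hc, h⟩ := Polynomial.isUnit_iff.1 h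
  exact ⟨c, hc.ne_zero, h.symm⟩

/-- Let `P(z) = Σ_{k=0}^ℓ Y_k B_k^ℓ(z)` be an `n×n` matrix polynomial
of grade `ℓ ≥ 2` in the Bernstein basis (so `P(1) = Y_ℓ`), and let `L_B(z)` be the
Bernstein companion pencil (blocks encoded on `Fin ℓ × Fin n`, block index first,
0-based, shifted from the 1-based description).  If `Y_ℓ` is invertible then
`L_B(z)` is a linearization of `P(z)`: there are unimodular matrix polynomials
`E(z)`, `F(z)` with `E(z)·L_B(z)·F(z) = diag(P(z), I_n, …, I_n)`. -/
theorem bernstein_pencil_is_linearization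
    (n ℓ : ℕ) (hn : 1 ≤ n) (hℓ : 2 ≤ ℓ)
    (Y : ℕ → Matrix (Fin n) (Fin n) ℂ)
    (P : Matrix (Fin n) (Fin n) (Polynomial ℂ))
    (hP : P = ∑ k ∈ Finset.range (ℓ + 1),
      (C ((Nat.choose ℓ k : ℂ)) * X ^ k * (1 - X) ^ (ℓ - k)) • (Y k).map C)
    (LB : Matrix (Fin ℓ × Fin n) (Fin ℓ × Fin n) (Polynomial ℂ))
    (hLB : ∀ i j : Fin ℓ, ∀ s t : Fin n, LB (i, s) (j, t) =
      if i.val = 0 then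
        (if j.val = 0 then
          ((C ((ℓ : ℂ))⁻¹ * X) • (Y ℓ).map C +
            ((1 - X : Polynomial ℂ)) • (Y (ℓ - 1)).map C) s t
        else ((1 - X : Polynomial ℂ) • (Y (ℓ - 1 - j.val)).map C) s t)
      else if j.val + 1 = i.val then (if s = t then X - 1 else 0)
      else if j = i then
        (if s = t then C (((i.val + 1 : ℕ) : ℂ) / ((ℓ - i.val : ℕ) : ℂ)) * X else 0)
      else 0)
    (hY : IsUnit (Y ℓ)) :
    ∃ E Fm : Matrix (Fin ℓ × Fin n) (Fin ℓ × Fin n) (Polynomial ℂ),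
      (∃ c : ℂ, c ≠ 0 ∧ E.det = C c) ∧
      (∃ c : ℂ, c ≠ 0 ∧ Fm.det = C c) ∧
      E * LB * Fm = Matrix.of fun q r : Fin ℓ × Fin n =>
        if q.1 = r.1 then
          (if q.1.val = 0 then P q.2 r.2 else if q.2 = r.2 then 1 else 0)
        else 0 := by
  obtain ⟨m, rfl⟩ : ∃ m, ℓ = m + 1 := ⟨ℓ - 1, by omega⟩
  obtain ⟨u, hu⟩ := bp_exists_u m
  have hdet := bp_isUnit_det m u hu
  set G := bpG m u with hG
  have hGH : G * G⁻¹ = 1 := Matrix.mul_nonsing_inv _ hdet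
  have hHG : G⁻¹ * G = 1 := Matrix.nonsing_inv_mul _ hdet
  have hcol : ∀ k, G⁻¹ k 0 = bpV m k := by
    intro k
    have h1 := bp_mulVec m u hu
    have h2 : G⁻¹ *ᵥ (G *ᵥ bpV m) = bpV m := by
      rw [Matrix.mulVec_mulVec, hHG, Matrix.one_mulVec]
    rw [← hG] at h1
    rw [h1] at h2
    have := congrFun h2 k
    simpa using this
  set Fm := Matrix.kroneckerMap (· * ·) G⁻¹ (1 : Matrix (Fin n) (Fin n) ℂ[X]) with hFm
  set D : Matrix (Fin (m + 1) × Fin n) (Fin (m + 1) × Fin n) ℂ[X] :=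
    Matrix.of fun q r : Fin (m + 1) × Fin n =>
        if q.1 = r.1 then
          (if q.1.val = 0 then P q.2 r.2 else if q.2 = r.2 then 1 else 0)
        else 0 with hD
  have hGF : Matrix.kroneckerMap (· * ·) G (1 : Matrix (Fin n) (Fin n) ℂ[X]) * Fm = 1 := by
    rw [hFm, ← Matrix.mul_kronecker_mul, hGH, one_mul, Matrix.one_kronecker_one]
  have hFunit : IsUnit Fm.det := by
    have := congrArg Matrix.det hGF
    rw [Matrix.det_mul, Matrix.det_one] at this
    exact IsUnit.of_mul_eq_one_right _ this
  set N : Matrix (Fin (m + 1) × Fin n) (Fin (m + 1) × Fin n) ℂ[X] := LB * Fm - D with hN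
  have hDrow : ∀ q r : Fin (m + 1) × Fin n, q.1 ≠ 0 →
      D q r = (1 : Matrix (Fin (m + 1) × Fin n) (Fin (m + 1) × Fin n) ℂ[X]) q r := by
    rintro ⟨i, s⟩ ⟨j, t⟩ hi
    have hi' : i.val ≠ 0 := fun h => hi (Fin.ext h)
    simp only [hD, Matrix.of_apply, Matrix.one_apply, Prod.mk.injEq, if_neg hi', ite_and]
  have hrow : ∀ q r : Fin (m + 1) × Fin n, q.1 ≠ 0 → N q r = 0 := by
    rintro ⟨i, s⟩ ⟨j, t⟩ hi
    have hi' : i.val ≠ 0 := fun h => hi (Fin.ext h)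
    rw [hN, Matrix.sub_apply, hDrow _ _ hi, ← hGF, Matrix.mul_apply, Matrix.mul_apply, sub_eq_zero]
    refine Finset.sum_congr rfl ?_
    rintro ⟨k, r⟩ _
    congr 1
    rw [hLB, if_neg hi']
    simp only [Matrix.kroneckerMap_apply, hG, bpG, Matrix.of_apply, if_neg hi', Matrix.one_apply,
      mul_ite, mul_one, mul_zero]
    split_ifs <;> rfl
  have hcol0 : ∀ q r : Fin (m + 1) × Fin n, r.1 = 0 → N q r = 0 := by
    rintro ⟨i, s⟩ ⟨j, t⟩ hj
    by_cases hi : i = 0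
    · dsimp only at hj
      subst hi hj
      rw [hN, Matrix.sub_apply, sub_eq_zero, Matrix.mul_apply, Fintype.sum_prod_type]
      have hDP : D (0, s) (0, t) = P s t := by simp [hD]
      rw [hDP, hP]
      have hb := bp_sum m (fun k => Y k s t)
      rw [Matrix.sum_apply]
      simp only [Matrix.smul_apply, Matrix.map_apply, smul_eq_mul]
      rw [hb]
      refine Finset.sum_congr rfl fun k _ => ?_
      simp only [hFm, Matrix.kroneckerMap_apply, Matrix.one_apply, mul_ite, mul_one, mul_zero,
        Finset.sum_ite_eq', Finset.mem_univ, if_true, hcol]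
      congr 1
      rw [hLB]
      simp
    · exact hrow _ _ hi
  have hNN : N * N = 0 := by
    ext1 q r
    rw [Matrix.mul_apply, Matrix.zero_apply]
    refine Finset.sum_eq_zero fun p _ => ?_
    by_cases hp : p.1 = 0
    · rw [hcol0 _ _ hp, zero_mul]
    · rw [hrow _ _ hp, mul_zero]
  have hND : N * D = N := by
    conv_rhs => rw [← mul_one N]
    ext1 q r
    rw [Matrix.mul_apply, Matrix.mul_apply]
    refine Finset.sum_congr rfl fun p _ => ?_
    by_cases hp : p.1 = 0
    · rw [hcol0 _ _ hp, zero_mul, zero_mul]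
    · rw [hDrow _ _ hp]
  refine ⟨1 - N, Fm, bp_unimod _ ?_, bp_unimod _ hFunit, ?_⟩
  · have h1 : (1 - N) * (1 + N) = 1 := by
      rw [sub_mul, one_mul, mul_add, mul_one, hNN, add_zero, add_sub_cancel_right]
    have := congrArg Matrix.det h1
    rw [Matrix.det_mul, Matrix.det_one] at this
    exact IsUnit.of_mul_eq_one _ this
  · have hT : LB * Fm = D + N := by rw [hN]; abel
    rw [Matrix.mul_assoc, hT, sub_mul, one_mul, mul_add, hND, hNN, add_zero, add_sub_cancel_right]
end

section
/- Let F be a field, n ≥ 1, ℓ ≥ 1, and let τ_0, …, τ_ℓ ∈ F be distinct with barycentric weights β_k = ∏_{j≠k} 1/(τ_k − τ_j) and Lagrange basis polynomials w_k(z) = β_k ∏_{j≠k}(z − τ_j). Let P_0, …, P_ℓ be invertible n×n matrices over F and P(z) = Σ_{k=0}^ℓ P_k w_k(z). Let L(z) be the n(ℓ+2) × n(ℓ+2) block pencil (block indices 0, …, ℓ+1): block (0,0) = 0, block (0, 1+i) = −P_{ℓ−i} for 0 ≤ i ≤ ℓ, block (1+i, 0) = β_{ℓ−i}·I_n for 0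 ≤ i ≤ ℓ, block (1+i, 1+i) = (z − τ_{ℓ−i})·I_n for 0 ≤ i ≤ ℓ, other blocks 0. Define G = (1/β_0)(z − τ_0)·I_n; U_k = −(β_k/β_0)(τ_k − τ_0)·P_k^{−1} for 1 ≤ k ≤ ℓ; then for each 1 ≤ k ≤ ℓ the quantity β_k G + U_k P(z) is divisible by (z − τ_k) and we set H_k(z) = −(β_k G + U_k P(z))/(z − τ_k), a matrix polynomial of grade ℓ−1. Define M(z) to be equal to L(z) except in the last block column, where: block (0, ℓ+1) of M is 0, block (i, ℓ+1) of M is U_{ℓ+1−i} for 1 ≤ i ≤ ℓ, and block (ℓ+1, ℓ+1) of M is 0; and define H(z) to be the block identity matrix except: block (ℓ+1, ℓ+1) is P(z), block (0, ℓ+1) is G, and block (i, ℓ+1) is H_{ℓ+1−i}(z) for 1 ≤ i ≤ ℓ. Then M(z)·H(z) = L(z), the identity Σ_{k=1}^ℓ P_k H_k(z) = P_0 holds, and det M(z) is a nonzero constant of F (M is unimodular). -/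
open Polynomial

/-- determinant of a block upper triangular matrix -/
theorem aux_det_upper {R : Type*} [CommRing R] (m n : ℕ)
    (A : Matrix (Fin m) (Fin m) (Matrix (Fin n) (Fin n) R))
    (h : ∀ r c, c < r → A r c = 0) :
    (Matrix.comp _ _ _ _ R A).det = ∏ r, (A r r).det := by
  have hb : (Matrix.comp _ _ _ _ R A).BlockTriangular Prod.fst := by
    intro p q hpq
    simp [Matrix.comp_apply, h _ _ hpq]
  rw [hb.det_fintype]
  refine Finset.prod_congr rfl fun r _ => ?_
  let e : Fin n ≃ {p : Fin m × Fin n // p.1 = r} :=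
    { toFun := fun s => ⟨(r, s), rfl⟩
      invFun := fun p => p.1.2
      left_inv := fun s => rfl
      right_inv := by rintro ⟨⟨a, b⟩, h⟩; simp at h; subst h; rfl }
  rw [← Matrix.det_submatrix_equiv_self e]
  rfl

theorem aux_det_lower {R : Type*} [CommRing R] (m n : ℕ)
    (A : Matrix (Fin m) (Fin m) (Matrix (Fin n) (Fin n) R))
    (h : ∀ r c, r < c → A r c = 0) :
    (Matrix.comp _ _ _ _ R A).det = ∏ r, (A r r).det := by
  have := aux_det_upper m n (Matrix.of fun r c => (A c r).transpose)
    (fun r c hrc => by simp [h _ _ hrc])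
  rw [← Matrix.det_transpose]
  simp only [Matrix.of_apply, Matrix.det_transpose] at this
  rw [← this]
  rfl

theorem aux_comp_mul {R : Type*} [CommRing R] (m n : ℕ)
    (A B : Matrix (Fin m) (Fin m) (Matrix (Fin n) (Fin n) R)) :
    Matrix.comp _ _ _ _ R A * Matrix.comp _ _ _ _ R B = Matrix.comp _ _ _ _ R (A * B) := by
  ext ⟨r, s⟩ ⟨c, t⟩
  simp [Matrix.mul_apply, Matrix.comp_apply, Fintype.sum_prod_type, Matrix.sum_apply]

theorem aux_interp {F : Type*} [Field F] (ℓ : ℕ) (hℓ : 1 ≤ ℓ)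
    (τ : ℕ → F) (hτ : ∀ j ≤ ℓ, ∀ k ≤ ℓ, j ≠ k → τ j ≠ τ k)
    (β : ℕ → F)
    (hβ : ∀ k ≤ ℓ, β k = ∏ j ∈ (Finset.range (ℓ + 1)).erase k, (τ k - τ j)⁻¹) :
    ∑ k ∈ Finset.range (ℓ + 1), C (τ k - τ 0) *
      (C (β k) * ∏ j ∈ (Finset.range (ℓ + 1)).erase k, (X - C (τ j))) = X - C (τ 0) := by
  have hinj : Set.InjOn τ (Finset.range (ℓ + 1) : Finset ℕ) := by
    intro a ha b hb hab
    by_contra hne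
    simp at ha hb
    exact hτ a (by omega) b (by omega) hne hab
  have h := Lagrange.eq_interpolate (s := Finset.range (ℓ + 1)) (v := τ) (f := X - C (τ 0)) hinj
    (by rw [degree_X_sub_C, Finset.card_range]; exact_mod_cast (by omega : 1 < ℓ + 1))
  conv_rhs => rw [h]
  rw [Lagrange.interpolate_apply]
  refine Finset.sum_congr rfl fun k hk => ?_
  simp only [Lagrange.basis, Lagrange.basisDivisor, Finset.prod_mul_distrib]
  rw [hβ k (by simp at hk; omega), map_prod]
  simp

theorem aux_eval {F : Type*} [Field F] (n ℓ : ℕ)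
    (τ : ℕ → F) (hτ : ∀ j ≤ ℓ, ∀ k ≤ ℓ, j ≠ k → τ j ≠ τ k)
    (β : ℕ → F)
    (hβ : ∀ k ≤ ℓ, β k = ∏ j ∈ (Finset.range (ℓ + 1)).erase k, (τ k - τ j)⁻¹)
    (Pv : ℕ → Matrix (Fin n) (Fin n) F)
    (P : Matrix (Fin n) (Fin n) (Polynomial F))
    (hP : P = ∑ k ∈ Finset.range (ℓ + 1),
      (C (β k) * ∏ j ∈ (Finset.range (ℓ + 1)).erase k, (X - C (τ j))) •
        (Pv k).map C) (k : ℕ) (hk : k ≤ ℓ) : P.map (eval (τ k)) = Pv k := by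
  ext s t
  subst hP
  simp only [Matrix.map_apply, Matrix.sum_apply, Matrix.smul_apply, smul_eq_mul, eval_finsetSum,
    eval_mul, eval_C, eval_prod, eval_sub, eval_X]
  rw [Finset.sum_eq_single k]
  · rw [hβ k hk, ← Finset.prod_mul_distrib, Finset.prod_eq_one, one_mul]
    intro j hj
    simp at hj
    exact inv_mul_cancel₀ (sub_ne_zero.2 (hτ k hk j (by omega) (Ne.symm hj.1)))
  · intro j hj hjk
    rw [Finset.prod_eq_zero (i := k)] <;> simp
    exact ⟨fun h => hjk h.symm, by omega⟩
  · intro h; simp at h; omega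

set_option maxHeartbeats 2000000

/-- The Hermite-normal-form-style factorization `M(z)·H(z) = L(z)` of
the Lagrange-basis companion pencil of `P(z) = Σ_{k=0}^ℓ P_k w_k(z)` on `ℓ+1`
distinct nodes with all values `P_k` invertible.  Blocks are encoded on
`Fin (ℓ+2) × Fin n`, block index first.  Here `G = (1/β₀)(z−τ₀)·I_n`,
`U_k = −(β_k/β₀)(τ_k−τ₀)·P_k⁻¹`, each `β_k G + U_k P(z)` is divisible by
`z−τ_k`, and `H_k(z) = −(β_k G + U_k P(z))/(z−τ_k)` (characterized below by
`(z−τ_k)·H_k = −(β_k G + U_k P)`); moreover `Σ_{k=1}^ℓ P_k H_k = P_0` and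
`det M` is a nonzero constant. -/
theorem lagrange_pencil_hermite_factorization
    {F : Type*} [Field F] (n ℓ : ℕ) (hn : 1 ≤ n) (hℓ : 1 ≤ ℓ)
    (τ : ℕ → F) (hτ : ∀ j ≤ ℓ, ∀ k ≤ ℓ, j ≠ k → τ j ≠ τ k)
    (β : ℕ → F)
    (hβ : ∀ k ≤ ℓ, β k = ∏ j ∈ (Finset.range (ℓ + 1)).erase k, (τ k - τ j)⁻¹)
    (Pv : ℕ → Matrix (Fin n) (Fin n) F)
    (hPv : ∀ k ≤ ℓ, IsUnit (Pv k))
    (P : Matrix (Fin n) (Fin n) (Polynomial F))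
    (hP : P = ∑ k ∈ Finset.range (ℓ + 1),
      (C (β k) * ∏ j ∈ (Finset.range (ℓ + 1)).erase k, (X - C (τ j))) •
        (Pv k).map C)
    (G : Matrix (Fin n) (Fin n) (Polynomial F))
    (hG : G = (C (β 0)⁻¹ * (X - C (τ 0))) • (1 : Matrix (Fin n) (Fin n) (Polynomial F)))
    (U : ℕ → Matrix (Fin n) (Fin n) F)
    (hU : ∀ k, 1 ≤ k → k ≤ ℓ → U k = -((β k / β 0) * (τ k - τ 0)) • (Pv k)⁻¹)
    (L M : Matrix (Fin (ℓ + 2) × Fin n) (Fin (ℓ + 2) × Fin n) (Polynomial F))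
    (hL : ∀ r c : Fin (ℓ + 2), ∀ s t : Fin n, L (r, s) (c, t) =
      if r.val = 0 then
        (if c.val = 0 then 0 else (-(Pv (ℓ - (c.val - 1))).map C) s t)
      else if c.val = 0 then (if s = t then C (β (ℓ - (r.val - 1))) else 0)
      else if r = c then (if s = t then X - C (τ (ℓ - (r.val - 1))) else 0)
      else 0)
    (hM : ∀ r c : Fin (ℓ + 2), ∀ s t : Fin n, M (r, s) (c, t) =
      if c.val = ℓ + 1 then
        (if r.val = 0 ∨ r.val = ℓ + 1 then 0 else ((U (ℓ + 1 - r.val)).map C) s t)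
      else L (r, s) (c, t)) :
    (∀ k, 1 ≤ k → k ≤ ℓ → ∀ s t : Fin n,
      (X - C (τ k)) ∣ ((C (β k) • G + (U k).map C * P) s t)) ∧
    (∀ Hk : ℕ → Matrix (Fin n) (Fin n) (Polynomial F),
      (∀ k, 1 ≤ k → k ≤ ℓ →
        (X - C (τ k)) • Hk k = -(C (β k) • G + (U k).map C * P)) →
      (M * (Matrix.of fun q r : Fin (ℓ + 2) × Fin n =>
          if r.1.val = ℓ + 1 then
            (if q.1.val = 0 then G q.2 r.2
             else if q.1.val = ℓ + 1 then P q.2 r.2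
             else (Hk (ℓ + 1 - q.1.val)) q.2 r.2)
          else if q.1 = r.1 then (if q.2 = r.2 then 1 else 0) else 0) = L) ∧
      ∑ k ∈ Finset.Icc 1 ℓ, (Pv k).map C * Hk k = (Pv 0).map C) ∧
    (∃ c : F, c ≠ 0 ∧ M.det = C c) := by
  have hβ0 : ∀ k ≤ ℓ, β k ≠ 0 := by
    intro k hk
    rw [hβ k hk, Finset.prod_ne_zero_iff]
    intro j hj
    simp at hj
    exact inv_ne_zero (sub_ne_zero.2 (hτ k hk j (by omega) (Ne.symm hj.1)))
  have hev := aux_eval n ℓ τ hτ β hβ Pv P hP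
  have hinv : ∀ k ≤ ℓ, Pv k * (Pv k)⁻¹ = 1 := fun k hk =>
    Matrix.mul_nonsing_inv _ ((Matrix.isUnit_iff_isUnit_det _).1 (hPv k hk))
  have hinv' : ∀ k ≤ ℓ, (Pv k)⁻¹ * Pv k = 1 := fun k hk =>
    Matrix.nonsing_inv_mul _ ((Matrix.isUnit_iff_isUnit_det _).1 (hPv k hk))
  have part1 : ∀ k, 1 ≤ k → k ≤ ℓ → ∀ s t : Fin n,
      (X - C (τ k)) ∣ ((C (β k) • G + (U k).map C * P) s t) := by
    intro k hk1 hk s t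
    rw [dvd_iff_isRoot, IsRoot.def]
    have h1 : eval (τ k) (((U k).map C * P) s t) = (U k * Pv k) s t := by
      rw [← hev k hk]
      simp [Matrix.mul_apply, eval_finsetSum]
    rw [Matrix.add_apply, eval_add, h1, hU k hk1 hk, Matrix.smul_mul, hinv' k hk, hG]
    by_cases hst : s = t
    · subst hst
      simp [Matrix.smul_apply]
      ring
    · simp [Matrix.smul_apply, Matrix.one_apply, hst]
  set w : F[X] := ∏ j ∈ Finset.range (ℓ + 1), (X - C (τ j)) with hw
  set v : ℕ → F[X] := fun k => ∏ j ∈ (Finset.range (ℓ + 1)).erase k, (X - C (τ j)) with hv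
  have hwv : ∀ k ≤ ℓ, v k * (X - C (τ k)) = w := fun k hk =>
    Finset.prod_erase_mul _ _ (by simp; omega)
  have hw0 : w ≠ 0 := Finset.prod_ne_zero_iff.2 fun j _ => X_sub_C_ne_zero _
  have hPs : P = ∑ k ∈ Finset.range (ℓ + 1), (C (β k) * v k) • (Pv k).map C := hP
  have hint : ∑ k ∈ Finset.range (ℓ + 1), C (τ k - τ 0) * (C (β k) * v k) = X - C (τ 0) :=
    aux_interp ℓ hℓ τ hτ β hβ
  have hrange : ∀ {A : Type _} [AddCommMonoid A] (f : ℕ → A),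
      ∑ k ∈ Finset.range (ℓ + 1), f k = f 0 + ∑ k ∈ Finset.Icc 1 ℓ, f k := by
    intro A _ f
    rw [Finset.sum_range_succ', add_comm, Finset.range_eq_Ico, Finset.sum_Ico_add' f 0 ℓ 1]
    rfl
  have hrefl : ∀ {A : Type _} [AddCommMonoid A] (f : ℕ → A),
      ∑ i : Fin (ℓ + 1), f (ℓ - i.val) = ∑ k ∈ Finset.range (ℓ + 1), f k := by
    intro A _ f
    rw [← Finset.sum_range_reflect, Finset.sum_range]
    refine Finset.sum_congr rfl fun i _ => ?_
    congr 1
  have hrefl' : ∀ {A : Type _} [AddCommMonoid A] (f : ℕ → A),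
      ∑ i : Fin ℓ, f (ℓ - i.val) = ∑ k ∈ Finset.Icc 1 ℓ, f k := by
    intro A _ f
    have h1 : ∑ k ∈ Finset.Icc 1 ℓ, f k = ∑ k ∈ Finset.range ℓ, f (k + 1) := by
      rw [Finset.range_eq_Ico, Finset.sum_Ico_add' f 0 ℓ 1]
      rfl
    rw [h1, ← Finset.sum_range_reflect, Finset.sum_range]
    refine Finset.sum_congr rfl fun i _ => ?_
    congr 1
    omega
  -- the sum identity
  have part2 : ∀ Hk : ℕ → Matrix (Fin n) (Fin n) (Polynomial F),
      (∀ k, 1 ≤ k → k ≤ ℓ →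
        (X - C (τ k)) • Hk k = -(C (β k) • G + (U k).map C * P)) →
      ∑ k ∈ Finset.Icc 1 ℓ, (Pv k).map C * Hk k = (Pv 0).map C := by
    intro Hk hHk
    have key : ∀ k ∈ Finset.Icc 1 ℓ, w • ((Pv k).map C * Hk k) =
        -((C (β 0)⁻¹ * (X - C (τ 0)) * (C (β k) * v k)) • (Pv k).map C) +
          (C (β 0)⁻¹ * (C (τ k - τ 0) * (C (β k) * v k))) • P := by
      intro k hk
      simp at hk
      have hPU : (Pv k).map C * (U k).map C
          = (-C ((β k / β 0) * (τ k - τ 0))) • (1 : Matrix (Fin n) (Fin n) F[X]) := by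
        rw [← Matrix.map_mul, hU k hk.1 hk.2, Matrix.mul_smul, hinv k hk.2]
        ext1 s t
        by_cases hst : s = t <;> simp [Matrix.smul_apply, Matrix.one_apply, hst]
      rw [← hwv k hk.2, ← smul_smul, ← Matrix.mul_smul, hHk k hk.1 hk.2, Matrix.mul_neg,
        Matrix.mul_add, ← Matrix.mul_assoc, hPU, hG]
      simp only [Matrix.mul_smul, Matrix.smul_mul, Matrix.mul_one, Matrix.one_mul, smul_smul,
        smul_neg, smul_add, div_eq_mul_inv, map_mul]
      rw [neg_add]
      ext1 s t
      simp only [Matrix.add_apply, Matrix.neg_apply, Matrix.smul_apply, smul_eq_mul]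
      ring
    have hsum : w • ∑ k ∈ Finset.Icc 1 ℓ, (Pv k).map C * Hk k = w • (Pv 0).map C := by
      rw [Finset.smul_sum, Finset.sum_congr rfl key, Finset.sum_add_distrib,
        Finset.sum_neg_distrib]
      have e1 := hrange (fun k => (C (β 0)⁻¹ * (X - C (τ 0)) * (C (β k) * v k)) • (Pv k).map C)
      have e2 := hrange (fun k => (C (β 0)⁻¹ * (C (τ k - τ 0) * (C (β k) * v k))) • P)
      have e3 : ∑ k ∈ Finset.range (ℓ + 1),
          (C (β 0)⁻¹ * (X - C (τ 0)) * (C (β k) * v k)) • (Pv k).map C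
          = (C (β 0)⁻¹ * (X - C (τ 0))) • P := by
        conv_rhs => rw [hPs]
        rw [Finset.smul_sum]
        simp only [smul_smul]
      have e4 : ∑ k ∈ Finset.range (ℓ + 1),
          (C (β 0)⁻¹ * (C (τ k - τ 0) * (C (β k) * v k))) • P
          = (C (β 0)⁻¹ * (X - C (τ 0))) • P := by
        rw [← Finset.sum_smul, ← Finset.mul_sum, hint]
      have e5 : C (β 0)⁻¹ * (X - C (τ 0)) * (C (β 0) * v 0) = w := by
        rw [← hwv 0 (by omega)]
        have : C (β 0)⁻¹ * C (β 0) = (1 : F[X]) := by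
          rw [← C_mul, inv_mul_cancel₀ (hβ0 0 (by omega)), C_1]
        linear_combination (X - C (τ 0)) * v 0 * this
      rw [e3] at e1
      rw [e4] at e2
      simp only [e5, sub_self, C_0, zero_mul, mul_zero, zero_smul, zero_add] at e1 e2
      rw [← e2, e1]
      abel
    ext1 s t
    have := congrFun (congrFun hsum s) t
    simp only [Matrix.smul_apply, smul_eq_mul] at this
    exact mul_left_cancel₀ hw0 this
  -- block forms
  let Lb : Matrix (Fin (ℓ + 2)) (Fin (ℓ + 2)) (Matrix (Fin n) (Fin n) F[X]) :=
    Matrix.of fun r c =>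
      if r.val = 0 then (if c.val = 0 then 0 else -(Pv (ℓ - (c.val - 1))).map C)
      else if c.val = 0 then C (β (ℓ - (r.val - 1))) • 1
      else if r = c then (X - C (τ (ℓ - (r.val - 1)))) • 1 else 0
  let Mb : Matrix (Fin (ℓ + 2)) (Fin (ℓ + 2)) (Matrix (Fin n) (Fin n) F[X]) :=
    Matrix.of fun r c =>
      if c.val = ℓ + 1 then
        (if r.val = 0 ∨ r.val = ℓ + 1 then 0 else (U (ℓ + 1 - r.val)).map C)
      else Lb r c
  have hLb : L = Matrix.comp _ _ _ _ _ Lb := by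
    ext1 ⟨r, s⟩ ⟨c, t⟩
    rw [hL]
    simp only [Matrix.comp_apply, Lb, Matrix.of_apply]
    by_cases hst : s = t
    · subst hst
      simp only [if_true]
      split_ifs <;> simp
    · simp only [if_neg hst]
      split_ifs <;> simp [hst]
  have hMb : M = Matrix.comp _ _ _ _ _ Mb := by
    ext1 ⟨r, s⟩ ⟨c, t⟩
    rw [hM, hLb]
    simp only [Matrix.comp_apply, Mb, Matrix.of_apply]
    split_ifs <;> simp
  let Hb : (ℕ → Matrix (Fin n) (Fin n) F[X]) →
      Matrix (Fin (ℓ + 2)) (Fin (ℓ + 2)) (Matrix (Fin n) (Fin n) F[X]) := fun Hk =>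
    Matrix.of fun q r =>
      if r.val = ℓ + 1 then
        (if q.val = 0 then G else if q.val = ℓ + 1 then P else Hk (ℓ + 1 - q.val))
      else if q = r then 1 else 0
  have part3 : ∀ Hk : ℕ → Matrix (Fin n) (Fin n) (Polynomial F),
      (∀ k, 1 ≤ k → k ≤ ℓ →
        (X - C (τ k)) • Hk k = -(C (β k) • G + (U k).map C * P)) →
      Mb * Hb Hk = Lb := by
    intro Hk hHk
    refine Matrix.ext fun r c => ?_
    rw [Matrix.mul_apply]
    by_cases hc : c.val = ℓ + 1
    · have hc' : c = Fin.last (ℓ + 1) := Fin.ext hc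
      subst hc'
      rw [Fin.sum_univ_succ, Fin.sum_univ_castSucc]
      have hlt : ∀ i : Fin ℓ, i.val ≠ ℓ := fun i => i.2.ne
      refine Fin.cases ?_ (fun r => ?_) r
      · have := hrefl' (fun k => (Pv k).map C * Hk k)
        rw [part2 Hk hHk] at this
        simp [Mb, Hb, Lb, hlt]
        exact this
      · refine Fin.lastCases ?_ (fun r => ?_) r
        · have h0 : C (β 0) * (C (β 0)⁻¹ * (X - C (τ 0))) = X - C (τ 0) := by
            rw [← mul_assoc, ← C_mul, mul_inv_cancel₀ (hβ0 0 (by omega)), C_1, one_mul]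
          have hne : ∀ i : Fin ℓ, (Fin.last ℓ).succ ≠ i.castSucc.succ := fun i h => by
            have := congrArg Fin.val h
            simp at this
            exact hlt i this.symm
          rw [Finset.sum_eq_zero]
          · simp [Mb, Hb, Lb, hG, smul_smul]
            congr 1
            linear_combination h0
          · intro i _
            simp only [Mb, Lb, Matrix.of_apply, if_neg (hne i)]
            simp [hlt]
        · have h0 := hHk (ℓ - r.val) (by omega) (by omega)
          rw [Finset.sum_eq_single r]
          · simp [Mb, Hb, Lb, hlt, h0]
          · intro i _ hi
            have : r.castSucc.succ ≠ i.castSucc.succ := fun h => hi (by simpa using h.symm)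
            simp only [Mb, Lb, Matrix.of_apply, if_neg this]
            simp [hlt]
          · simp
    · simp [Hb, hc, Mb]
  have hHcomp : ∀ Hk : ℕ → Matrix (Fin n) (Fin n) F[X],
      (Matrix.of fun q r : Fin (ℓ + 2) × Fin n =>
          if r.1.val = ℓ + 1 then
            (if q.1.val = 0 then G q.2 r.2
             else if q.1.val = ℓ + 1 then P q.2 r.2
             else (Hk (ℓ + 1 - q.1.val)) q.2 r.2)
          else if q.1 = r.1 then (if q.2 = r.2 then 1 else 0) else 0)
        = Matrix.comp _ _ _ _ _ (Hb Hk) := by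
    intro Hk
    ext1 ⟨r, s⟩ ⟨c, t⟩
    simp only [Matrix.comp_apply, Hb, Matrix.of_apply]
    by_cases hst : s = t
    · subst hst
      simp only [if_true]
      split_ifs <;> simp
    · simp only [if_neg hst]
      split_ifs <;> simp [hst]
  refine ⟨part1, fun Hk hHk => ⟨?_, part2 Hk hHk⟩, 1, one_ne_zero, ?_⟩
  · rw [hHcomp, hMb, hLb, aux_comp_mul, part3 Hk hHk]
  -- determinant
  have hex : ∃ Hk : ℕ → Matrix (Fin n) (Fin n) F[X], ∀ k, 1 ≤ k → k ≤ ℓ →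
        (X - C (τ k)) • Hk k = -(C (β k) • G + (U k).map C * P) := by
    choose q hq using part1
    refine ⟨fun k => if h : 1 ≤ k ∧ k ≤ ℓ then -Matrix.of (q k h.1 h.2) else 0, ?_⟩
    intro k h1 h2
    simp only [dif_pos (And.intro h1 h2), smul_neg]
    congr 1
    ext1 s t
    rw [hq k h1 h2 s t]
    rfl
  obtain ⟨Hk, hHk⟩ := hex
  have hdP : P.det ≠ 0 := by
    intro h
    have h1 : eval (τ 0) P.det = (Pv 0).det := by
      rw [← hev 0 (by omega), ← coe_evalRingHom, RingHom.map_det]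
      rfl
    rw [h, eval_zero] at h1
    exact ((Matrix.isUnit_iff_isUnit_det _).1 (hPv 0 (by omega))).ne_zero h1.symm
  have hdH : (Matrix.comp _ _ _ _ _ (Hb Hk)).det = P.det := by
    rw [aux_det_upper, Fin.prod_univ_castSucc, Finset.prod_eq_one]
    · simp [Hb]
    · intro i _
      simp [Hb, i.2.ne]
    · intro r c hrc
      have h1 : c.val ≠ ℓ + 1 := by omega
      simp [Hb, h1, hrc.ne']
  let Kb : Matrix (Fin (ℓ + 2)) (Fin (ℓ + 2)) (Matrix (Fin n) (Fin n) F[X]) :=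
    Matrix.of fun r c =>
      if c.val = 0 then
        (if r.val = 0 then w • 1 else -(C (β (ℓ - (r.val - 1))) * v (ℓ - (r.val - 1))) • 1)
      else if r = c then 1 else 0
  have hdK : (Matrix.comp _ _ _ _ _ Kb).det = w ^ n := by
    rw [aux_det_lower, Fin.prod_univ_succ, Finset.prod_eq_one]
    · simp [Kb]
    · intro i _
      simp [Kb]
    · intro r c hrc
      have h1 : c.val ≠ 0 := by omega
      simp only [Kb, Matrix.of_apply, if_neg h1, if_neg hrc.ne]
  have hLK0 : (Lb * Kb) 0 0 = P := by
    rw [Matrix.mul_apply, Fin.sum_univ_succ]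
    have := hrefl (fun k => (C (β k) * v k) • (Pv k).map C)
    rw [← hPs] at this
    rw [← this]
    simp [Lb, Kb]
  have hLKs : ∀ i : Fin (ℓ + 1), (Lb * Kb) i.succ 0 = 0 := by
    intro i
    rw [Matrix.mul_apply, Fin.sum_univ_succ, Finset.sum_eq_single i]
    · simp only [Lb, Kb, Matrix.of_apply]
      simp [smul_smul, ← hwv (ℓ - i.val) (by omega)]
      rw [← sub_eq_add_neg, ← sub_smul]
      ring_nf
      simp
    · intro j _ hj
      simp [Lb, hj.symm]
    · simp
  have hLKc : ∀ r (i : Fin (ℓ + 1)), (Lb * Kb) r i.succ = Lb r i.succ := by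
    intro r i
    rw [Matrix.mul_apply, Finset.sum_eq_single i.succ]
    · simp [Kb]
    · intro j _ hj
      simp [Kb, hj]
    · simp
  have hdLK : (Matrix.comp _ _ _ _ _ (Lb * Kb)).det = P.det * w ^ n := by
    rw [aux_det_upper, Fin.prod_univ_succ, hLK0]
    · congr 1
      rw [hw, Finset.prod_range, ← Finset.prod_pow]
      rw [← Equiv.prod_comp Fin.revPerm]
      refine Finset.prod_congr rfl fun i _ => ?_
      rw [hLKc]
      simp [Lb, Fin.val_rev]
      congr 4
      omega
    · intro r c hrc
      revert hrc
      refine Fin.cases ?_ (fun r => ?_) r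
      · intro h; exact absurd h (Fin.not_lt_zero c)
      · refine Fin.cases ?_ (fun c => ?_) c
        · intro _; exact hLKs r
        · intro h
          rw [hLKc]
          have : r ≠ c := by rintro rfl; exact lt_irrefl _ h
          simp [Lb, this]
  have hdL : L.det = P.det := by
    rw [← aux_comp_mul, Matrix.det_mul, hdK, ← hLb] at hdLK
    exact mul_right_cancel₀ (pow_ne_zero n hw0) hdLK
  have hfin : M.det * P.det = P.det := by
    rw [← hdH, hMb, ← Matrix.det_mul, aux_comp_mul, part3 Hk hHk, ← hLb, hdL, hdH]
  rw [C_1]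
  exact mul_right_cancel₀ hdP (by rw [hfin, one_mul])
end

section
/- Let F be a field, n ≥ 1, and let A, B be n×n matrices over the polynomial ring F[z]. Then A and B are equivalent over F[z] (i.e., there exist matrices U, V invertible over F[z] with A = U·B·V) if and only if for every irreducible polynomial f ∈ F[z], the images of A and B in the n×n matrices over the localization F[z]_f are equivalent over F[z]_f, where F[z]_f denotes the localization of F[z] at the multiplicative set of all polynomials relatively prime to f (equivalently, the localization at the prime ideal generated by f). -/
open Polynomial

/-- Equivalence of square matrices over a commutative ring. -/
def MEqv {ι R : Type*} [Fintype ι] [DecidableEq ι] [CommRing R] (A B : Matrix ι ι R) : Prop :=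
  ∃ U V : Matrix ι ι R, IsUnit U ∧ IsUnit V ∧ A = U * B * V

namespace MEqv

section
variable {ι κ R S : Type*} [Fintype ι] [DecidableEq ι] [Fintype κ] [DecidableEq κ]
  [CommRing R] [CommRing S]

theorem refl (A : Matrix ι ι R) : MEqv A A := ⟨1, 1, isUnit_one, isUnit_one, by simp⟩

theorem symm {A B : Matrix ι ι R} (h : MEqv A B) : MEqv B A := by
  obtain ⟨U, V, ⟨u, rfl⟩, ⟨v, rfl⟩, rfl⟩ := h
  refine ⟨↑u⁻¹, ↑v⁻¹, Units.isUnit _, Units.isUnit _, ?_⟩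
  simp [mul_assoc]

theorem trans {A B C : Matrix ι ι R} (h : MEqv A B) (h' : MEqv B C) : MEqv A C := by
  obtain ⟨U, V, hU, hV, rfl⟩ := h
  obtain ⟨U', V', hU', hV', rfl⟩ := h'
  exact ⟨U * U', V' * V, hU.mul hU', hV'.mul hV, by simp only [mul_assoc]⟩

theorem of_mul_left {A U : Matrix ι ι R} (hU : IsUnit U) : MEqv (U * A) A :=
  ⟨U, 1, hU, isUnit_one, by simp⟩

theorem of_mul_right {A U : Matrix ι ι R} (hU : IsUnit U) : MEqv (A * U) A :=
  ⟨1, U, isUnit_one, hU, by simp⟩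

theorem map {A B : Matrix ι ι R} (h : MEqv A B) (φ : R →+* S) : MEqv (A.map φ) (B.map φ) := by
  obtain ⟨U, V, hU, hV, rfl⟩ := h
  exact ⟨φ.mapMatrix U, φ.mapMatrix V, hU.map _, hV.map _, by simp [Matrix.map_mul]⟩

theorem smul {A B : Matrix ι ι R} (h : MEqv A B) (c : R) : MEqv (c • A) (c • B) := by
  obtain ⟨U, V, hU, hV, rfl⟩ := h
  exact ⟨U, V, hU, hV, by simp⟩

theorem of_smul [IsDomain R] {A B : Matrix ι ι R} {c : R} (hc : c ≠ 0)
    (h : MEqv (c • A) (c • B)) : MEqv A B := by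
  obtain ⟨U, V, hU, hV, h⟩ := h
  refine ⟨U, V, hU, hV, ?_⟩
  rw [Matrix.mul_smul, Matrix.smul_mul] at h
  exact smul_right_injective _ hc h

theorem smul_unit (A : Matrix ι ι R) {c : R} (hc : IsUnit c) : MEqv (c • A) A := by
  have : c • A = (c • (1 : Matrix ι ι R)) * A := by simp
  rw [this]
  apply of_mul_left
  rw [Matrix.isUnit_iff_isUnit_det]
  simp [hc.pow]

theorem eq_zero {A : Matrix ι ι R} (h : MEqv A 0) : A = 0 := by
  obtain ⟨U, V, hU, hV, rfl⟩ := h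
  simp

theorem reindex {A B : Matrix ι ι R} (h : MEqv A B) (e : ι ≃ κ) :
    MEqv (A.submatrix e.symm e.symm) (B.submatrix e.symm e.symm) := by
  obtain ⟨U, V, hU, hV, rfl⟩ := h
  refine ⟨U.submatrix e.symm e.symm, V.submatrix e.symm e.symm, ?_, ?_, ?_⟩
  · rwa [Matrix.isUnit_submatrix_equiv]
  · rwa [Matrix.isUnit_submatrix_equiv]
  · simp [Matrix.submatrix_mul_equiv]

theorem perm (A : Matrix ι ι R) (e f : ι ≃ ι) : MEqv (A.submatrix e f) A := by
  refine ⟨(1 : Matrix ι ι R).submatrix e id, (1 : Matrix ι ι R).submatrix id f, ?_, ?_, ?_⟩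
  · exact (Matrix.isUnit_submatrix_equiv e (Equiv.refl ι)).2 isUnit_one
  · exact (Matrix.isUnit_submatrix_equiv (Equiv.refl ι) f).2 isUnit_one
  · ext i j
    simp [Matrix.mul_apply, Matrix.one_apply]

theorem dvd_entries {A B : Matrix ι ι R} (h : MEqv A B) {d : R} (hd : ∀ i j, d ∣ B i j) (i j : ι) :
    d ∣ A i j := by
  obtain ⟨U, V, hU, hV, rfl⟩ := h
  simp only [Matrix.mul_apply]
  exact Finset.dvd_sum fun k _ => Dvd.dvd.mul_right
    (Finset.dvd_sum fun l _ => Dvd.dvd.mul_left (hd _ _) _) _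

theorem blocks {A B : Matrix ι ι R} (h : MEqv A B) :
    MEqv (Matrix.fromBlocks (1 : Matrix Unit Unit R) 0 0 A)
      (Matrix.fromBlocks (1 : Matrix Unit Unit R) 0 0 B) := by
  obtain ⟨U, V, hU, hV, rfl⟩ := h
  refine ⟨Matrix.fromBlocks 1 0 0 U, Matrix.fromBlocks 1 0 0 V, ?_, ?_, ?_⟩
  · rw [Matrix.isUnit_iff_isUnit_det] at hU ⊢; simpa using hU
  · rw [Matrix.isUnit_iff_isUnit_det] at hV ⊢; simpa using hV
  · simp [Matrix.fromBlocks_multiply]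

/-- Clearing the first row and column. -/
theorem schur (b : Matrix Unit ι R) (c : Matrix ι Unit R) (D : Matrix ι ι R) :
    MEqv (Matrix.fromBlocks 1 b c D) (Matrix.fromBlocks 1 0 0 (D - c * b)) := by
  refine ⟨Matrix.fromBlocks 1 0 c 1, Matrix.fromBlocks 1 b 0 1, ?_, ?_, ?_⟩
  · rw [Matrix.isUnit_iff_isUnit_det]; simp
  · rw [Matrix.isUnit_iff_isUnit_det]; simp
  · simp [Matrix.fromBlocks_multiply]

/-- Cancellation when the corner is a unit. -/
theorem cancel_unit {A B : Matrix ι ι R} {U V : Matrix (Unit ⊕ ι) (Unit ⊕ ι) R}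
    (hU : IsUnit U) (hV : IsUnit V)
    (h : U * Matrix.fromBlocks 1 0 0 A = Matrix.fromBlocks 1 0 0 B * V)
    (hu : IsUnit (U.toBlocks₁₁)) : MEqv A B := by
  obtain ⟨p, q, r, s, rfl⟩ : ∃ p q r s, U = Matrix.fromBlocks p q r s :=
    ⟨_, _, _, _, (Matrix.fromBlocks_toBlocks U).symm⟩
  obtain ⟨p', q', r', s', rfl⟩ : ∃ p q r s, V = Matrix.fromBlocks p q r s :=
    ⟨_, _, _, _, (Matrix.fromBlocks_toBlocks V).symm⟩
  simp only [Matrix.toBlocks_fromBlocks₁₁] at hu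
  simp only [Matrix.fromBlocks_multiply, Matrix.fromBlocks_inj] at h
  simp only [Matrix.mul_one, Matrix.mul_zero, Matrix.one_mul, Matrix.zero_mul, add_zero,
    zero_add] at h
  obtain ⟨h1, h2, h3, h4⟩ := h
  subst h1
  letI := hu.invertible
  have hU' : IsUnit (s - r * ⅟p * q) := by
    rw [Matrix.isUnit_iff_isUnit_det] at hU ⊢
    rw [Matrix.det_fromBlocks₁₁] at hU
    exact (IsUnit.mul_iff.1 hU).2
  have hV' : IsUnit (s' - r' * ⅟p * q') := by
    rw [Matrix.isUnit_iff_isUnit_det] at hV ⊢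
    rw [Matrix.det_fromBlocks₁₁] at hV
    exact (IsUnit.mul_iff.1 hV).2
  have key : (s - r * ⅟p * q) * A = B * (s' - r' * ⅟p * q') := by
    rw [Matrix.sub_mul, Matrix.mul_sub, h4, Matrix.mul_assoc _ q A, h2, h3]
    simp only [Matrix.mul_assoc]
  have e1 : MEqv ((s - r * ⅟p * q) * A) A := of_mul_left hU'
  rw [key] at e1
  have e2 := of_mul_right (A := B) hV'
  exact e1.symm.trans e2

/-- Cancellation over a local ring. -/
theorem cancel [IsLocalRing R] {A B : Matrix ι ι R}
    (h : MEqv (Matrix.fromBlocks (1 : Matrix Unit Unit R) 0 0 B)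
      (Matrix.fromBlocks (1 : Matrix Unit Unit R) 0 0 A)) : MEqv A B := by
  obtain ⟨U, V, hU, hV, h⟩ := h
  obtain ⟨v, rfl⟩ := hV
  obtain ⟨u, rfl⟩ := hU
  have hl : (u : Matrix (Unit ⊕ ι) (Unit ⊕ ι) R) * Matrix.fromBlocks 1 0 0 A =
      Matrix.fromBlocks 1 0 0 B * (↑v⁻¹ : Matrix (Unit ⊕ ι) (Unit ⊕ ι) R) := by
    rw [h]; simp [Matrix.mul_assoc]
  have hr : (↑u⁻¹ : Matrix (Unit ⊕ ι) (Unit ⊕ ι) R) * Matrix.fromBlocks 1 0 0 B =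
      Matrix.fromBlocks 1 0 0 A * (v : Matrix (Unit ⊕ ι) (Unit ⊕ ι) R) := by
    rw [h]; simp [← Matrix.mul_assoc]
  by_cases hu : IsUnit ((u : Matrix (Unit ⊕ ι) (Unit ⊕ ι) R).toBlocks₁₁)
  · exact cancel_unit u.isUnit v⁻¹.isUnit hl hu
  have hux : (u : Matrix (Unit ⊕ ι) (Unit ⊕ ι) R) * (↑u⁻¹ : Matrix (Unit ⊕ ι) (Unit ⊕ ι) R) = 1 := by simp
  obtain ⟨y, hy⟩ : ∃ y : Matrix ι Unit R,
      y = (v : Matrix (Unit ⊕ ι) (Unit ⊕ ι) R).toBlocks₂₁ := ⟨_, rfl⟩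
  let E : Matrix (Unit ⊕ ι) (Unit ⊕ ι) R := Matrix.fromBlocks 1 0 (A * y) 1
  let G : Matrix (Unit ⊕ ι) (Unit ⊕ ι) R := Matrix.fromBlocks 1 0 y 1
  have hE : IsUnit E := by rw [Matrix.isUnit_iff_isUnit_det]; simp [E]
  have hG : IsUnit G := by rw [Matrix.isUnit_iff_isUnit_det]; simp [G]
  have hEG : E * Matrix.fromBlocks 1 0 0 A = Matrix.fromBlocks 1 0 0 A * G := by
    simp [E, G, Matrix.fromBlocks_multiply]
  refine cancel_unit (u.isUnit.mul hE) (v⁻¹.isUnit.mul hG) ?_ ?_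
  · rw [Matrix.mul_assoc, hEG, ← Matrix.mul_assoc, hl, Matrix.mul_assoc]
  obtain ⟨p, q, r, s, hpq⟩ : ∃ p q r s, (u : Matrix (Unit ⊕ ι) (Unit ⊕ ι) R) = Matrix.fromBlocks p q r s :=
    ⟨_, _, _, _, (Matrix.fromBlocks_toBlocks _).symm⟩
  obtain ⟨p', q', r', s', hpq'⟩ : ∃ p q r s,
      (↑u⁻¹ : Matrix (Unit ⊕ ι) (Unit ⊕ ι) R) = Matrix.fromBlocks p q r s :=
    ⟨_, _, _, _, (Matrix.fromBlocks_toBlocks _).symm⟩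
  have hr' : r' = A * y := by
    rw [hpq', ← Matrix.fromBlocks_toBlocks (v : Matrix (Unit ⊕ ι) (Unit ⊕ ι) R), ← hy, Matrix.fromBlocks_multiply,
      Matrix.fromBlocks_multiply, Matrix.fromBlocks_inj] at hr
    simpa using hr.2.2.1
  rw [hpq, hpq', Matrix.fromBlocks_multiply, ← Matrix.fromBlocks_one, Matrix.fromBlocks_inj] at hux
  have h1 := hux.1
  rw [hpq] at hu ⊢
  simp only [Matrix.toBlocks_fromBlocks₁₁, E, Matrix.fromBlocks_multiply, ← hr'] at hu ⊢
  rw [Matrix.isUnit_iff_isUnit_det, Matrix.det_unique] at hu ⊢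
  have h2 : p default default * p' default default + (q * r') default default = 1 := by
    have := congrFun (congrFun h1 default) default
    simpa [Matrix.mul_apply] using this
  have h3 : (p * (1 : Matrix Unit Unit R) + q * r' : Matrix Unit Unit R) default default =
      1 - p default default * (p' default default - 1) := by
    rw [Matrix.mul_one, Matrix.add_apply]; linear_combination h2
  rw [h3]
  by_contra hcon
  have m1 : p default default ∈ IsLocalRing.maximalIdeal R := hu
  have m2 : 1 - p default default * (p' default default - 1) ∈ IsLocalRing.maximalIdeal R := hcon
  have m3 := Ideal.add_mem _ m2 (Ideal.mul_mem_right (p' default default - 1) _ m1)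
  rw [sub_add_cancel] at m3
  exact m3 isUnit_one

end

section euclid
variable {ι R : Type*} [Fintype ι] [DecidableEq ι] [EuclideanDomain R]

/-- A nonzero matrix is equivalent to one with an entry dividing all entries. -/
theorem exists_dvd {A : Matrix ι ι R} (hA : A ≠ 0) :
    ∃ M : Matrix ι ι R, MEqv A M ∧ ∃ i j, M i j ≠ 0 ∧ ∀ i' j', M i j ∣ M i' j' := by
  classical
  let S : Set R := {d | d ≠ 0 ∧ ∃ M : Matrix ι ι R, MEqv M A ∧ ∃ i j, M i j = d}
  have hS : S.Nonempty := by
    by_contra hne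
    apply hA
    ext i j
    by_contra h
    exact hne ⟨A i j, h, A, refl A, i, j, rfl⟩
  obtain ⟨d, ⟨hd0, hd⟩, hmin⟩ :=
    (EuclideanDomain.r_wellFounded (R := R)).has_min S hS
  have mod_zero : ∀ x, x % d ∈ S ∨ x % d = 0 → d ∣ x := by
    rintro x (h | h)
    · exact absurd (EuclideanDomain.mod_lt x hd0) (hmin _ h)
    · exact EuclideanDomain.mod_eq_zero.1 h
  have row : ∀ M : Matrix ι ι R, MEqv M A → ∀ i j, M i j = d → ∀ j', d ∣ M i j' := by
    intro M hM i j hij j'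
    by_cases hj : j' = j
    · subst hj; rw [hij]
    apply mod_zero
    by_cases h0 : M i j' % d = 0
    · exact Or.inr h0
    refine Or.inl ⟨h0, M * Matrix.transvection j j' (-(M i j' / d)), ?_, i, j', ?_⟩
    · refine (of_mul_right ?_).trans hM
      rw [Matrix.isUnit_iff_isUnit_det, Matrix.det_transvection_of_ne _ _ (Ne.symm hj)]
      exact isUnit_one
    · rw [Matrix.mul_transvection_apply_same, hij, EuclideanDomain.mod_eq_sub_mul_div]; ring
  have col : ∀ M : Matrix ι ι R, MEqv M A → ∀ i j, M i j = d → ∀ i', d ∣ M i' j := by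
    intro M hM i j hij i'
    by_cases hj : i' = i
    · subst hj; rw [hij]
    apply mod_zero
    by_cases h0 : M i' j % d = 0
    · exact Or.inr h0
    refine Or.inl ⟨h0, Matrix.transvection i' i (-(M i' j / d)) * M, ?_, i', j, ?_⟩
    · refine (of_mul_left ?_).trans hM
      rw [Matrix.isUnit_iff_isUnit_det, Matrix.det_transvection_of_ne _ _ hj]
      exact isUnit_one
    · rw [Matrix.transvection_mul_apply_same, hij, EuclideanDomain.mod_eq_sub_mul_div]; ring
  obtain ⟨M, hM, i, j, hij⟩ := hd
  refine ⟨M, hM.symm, i, j, by rwa [hij], fun i' j' => ?_⟩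
  rw [hij]
  by_cases hi : i' = i
  · subst hi; exact row M hM _ _ hij _
  obtain ⟨c, hc⟩ := col M hM i j hij i'
  have := row (Matrix.transvection i' i (1 - c) * M) ?_ i' j ?_ j'
  · rw [Matrix.transvection_mul_apply_same] at this
    exact (dvd_add_left (Dvd.dvd.mul_left (row M hM i j hij j') _)).1 this
  · refine (of_mul_left ?_).trans hM
    rw [Matrix.isUnit_iff_isUnit_det, Matrix.det_transvection_of_ne _ _ hi]
    exact isUnit_one
  · rw [Matrix.transvection_mul_apply_same, hij, hc]; ring

theorem exists_normal {A : Matrix (Unit ⊕ ι) (Unit ⊕ ι) R} (hA : A ≠ 0) :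
    ∃ d : R, d ≠ 0 ∧ ∃ D : Matrix ι ι R,
      MEqv A (d • Matrix.fromBlocks (1 : Matrix Unit Unit R) 0 0 D) := by
  obtain ⟨M, hM, i, j, hne, hdvd⟩ := exists_dvd hA
  choose N hN using hdvd
  let N' : Matrix (Unit ⊕ ι) (Unit ⊕ ι) R := Matrix.of N
  have hMN : M = M i j • N' := by
    ext a b; simpa [N'] using hN a b
  have hone : N' i j = 1 := by
    have := hN i j
    exact mul_left_cancel₀ hne (by simpa [N'] using this.symm)
  let N₂ := N'.submatrix (Equiv.swap (Sum.inl ()) i) (Equiv.swap (Sum.inl ()) j)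
  have h11 : N₂.toBlocks₁₁ = 1 := by
    ext a b; simp [N₂, Matrix.toBlocks₁₁, hone]
  have h2 : MEqv N₂ N' := perm _ _ _
  have h3 := schur N₂.toBlocks₁₂ N₂.toBlocks₂₁ N₂.toBlocks₂₂
  rw [← h11, Matrix.fromBlocks_toBlocks, h11] at h3
  have h4 := (h2.symm.trans h3).smul (M i j)
  rw [← hMN] at h4
  exact ⟨M i j, hne, _, hM.trans h4⟩

end euclid

end MEqv

/-- Local equivalence at all irreducible polynomials. -/
def LocEqv {F : Type*} [Field F] {ι : Type*} [Fintype ι] [DecidableEq ι]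
    (A B : Matrix ι ι (Polynomial F)) : Prop :=
  ∀ f : Polynomial F, ∀ hf : Irreducible f,
    MEqv (A.map (algebraMap (Polynomial F) (Localization (@Ideal.primeCompl _ _ (Ideal.span {f})
          ((Ideal.span_singleton_prime hf.ne_zero).mpr hf.prime)))))
      (B.map (algebraMap (Polynomial F) (Localization (@Ideal.primeCompl _ _ (Ideal.span {f})
          ((Ideal.span_singleton_prime hf.ne_zero).mpr hf.prime)))))

namespace LocEqv
variable {F : Type*} [Field F] {ι κ : Type*} [Fintype ι] [DecidableEq ι] [Fintype κ]
  [DecidableEq κ]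

theorem of_eqv {A B : Matrix ι ι (Polynomial F)} (h : MEqv A B) : LocEqv A B :=
  fun _ _ => h.map _

theorem symm {A B : Matrix ι ι (Polynomial F)} (h : LocEqv A B) : LocEqv B A :=
  fun f hf => (h f hf).symm

theorem trans {A B C : Matrix ι ι (Polynomial F)} (h : LocEqv A B) (h' : LocEqv B C) :
    LocEqv A C := fun f hf => (h f hf).trans (h' f hf)

theorem reindex {A B : Matrix ι ι (Polynomial F)} (h : LocEqv A B) (e : ι ≃ κ) :
    LocEqv (A.submatrix e.symm e.symm) (B.submatrix e.symm e.symm) :=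
  fun f hf => (h f hf).reindex e

theorem inj {f : Polynomial F} (hf : Irreducible f) : Function.Injective
    (algebraMap (Polynomial F) (Localization (@Ideal.primeCompl _ _ (Ideal.span {f})
          ((Ideal.span_singleton_prime hf.ne_zero).mpr hf.prime)))) := by
  haveI := ((Ideal.span_singleton_prime hf.ne_zero).mpr hf.prime)
  exact IsLocalization.injective _ (Ideal.primeCompl_le_nonZeroDivisors (Ideal.span {f}))

theorem eq_zero {A : Matrix ι ι (Polynomial F)} (h : LocEqv A 0) : A = 0 := by
  have h1 := h X irreducible_X
  rw [Matrix.map_zero _ (map_zero _)] at h1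
  have h2 := h1.eq_zero
  ext1 i j
  have h3 := congrFun (congrFun h2 i) j
  exact inj irreducible_X (by simpa using h3)

theorem dvd_of_local {a b : Polynomial F} (h : ∀ f : Polynomial F, ∀ hf : Irreducible f,
    algebraMap (Polynomial F) (Localization (@Ideal.primeCompl _ _ (Ideal.span {f})
          ((Ideal.span_singleton_prime hf.ne_zero).mpr hf.prime))) a ∣
    algebraMap (Polynomial F) (Localization (@Ideal.primeCompl _ _ (Ideal.span {f})
          ((Ideal.span_singleton_prime hf.ne_zero).mpr hf.prime))) b) : a ∣ b := by
  let I : Ideal (Polynomial F) :=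
    { carrier := {s | a ∣ s * b}
      add_mem' := by
        intro x y hx hy
        simp only [Set.mem_setOf_eq] at *
        rw [add_mul]; exact dvd_add hx hy
      zero_mem' := by simp
      smul_mem' := by
        intro c x hx
        simp only [Set.mem_setOf_eq, smul_eq_mul] at *
        rw [mul_assoc]; exact Dvd.dvd.mul_left hx _ }
  suffices hI : I = ⊤ by
    have h1 : (1 : Polynomial F) ∈ I := hI ▸ Submodule.mem_top
    have h2 : a ∣ 1 * b := h1
    rwa [one_mul] at h2
  by_contra hne
  have hpr : ∃ f : Polynomial F, Irreducible f ∧ I ≤ Ideal.span {f} := by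
    obtain ⟨g, hg⟩ := (IsPrincipalIdealRing.principal I).principal
    have hg' : I = Ideal.span {g} := hg
    have hgu : ¬ IsUnit g := fun hu => hne (by rw [hg', Ideal.span_singleton_eq_top]; exact hu)
    by_cases hg0 : g = 0
    · exact ⟨X, irreducible_X, by simp [hg', hg0]⟩
    · obtain ⟨f, hf, hfg⟩ := WfDvdMonoid.exists_irreducible_factor hgu hg0
      exact ⟨f, hf, by rw [hg', Ideal.span_singleton_le_span_singleton]; exact hfg⟩
  obtain ⟨f, hf, hle⟩ := hpr
  haveI := ((Ideal.span_singleton_prime hf.ne_zero).mpr hf.prime)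
  obtain ⟨c, hc⟩ := h f hf
  obtain ⟨⟨x, s⟩, hx⟩ := IsLocalization.surj (Ideal.span {f}).primeCompl c
  have hs : (s : Polynomial F) ∈ I := by
    refine ⟨x, inj hf ?_⟩
    simp only [map_mul] at hx ⊢
    rw [hc, ← hx]; ring
  exact s.2 (hle hs)

theorem dvd_corner {a b : Polynomial F} {A B : Matrix ι ι (Polynomial F)}
    (h : LocEqv (a • Matrix.fromBlocks (1 : Matrix Unit Unit (Polynomial F)) 0 0 A)
      (b • Matrix.fromBlocks (1 : Matrix Unit Unit (Polynomial F)) 0 0 B)) : b ∣ a := by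
  apply dvd_of_local
  intro f hf
  have := (h f hf).dvd_entries (d := algebraMap (Polynomial F) _ b) (fun i j => by
    rw [Matrix.map_apply, Matrix.smul_apply, smul_eq_mul, map_mul]
    exact dvd_mul_right _ _) (Sum.inl ()) (Sum.inl ())
  simpa using this

theorem cancel {a : Polynomial F} (ha : a ≠ 0) {A B : Matrix ι ι (Polynomial F)}
    (h : LocEqv (a • Matrix.fromBlocks (1 : Matrix Unit Unit (Polynomial F)) 0 0 A)
      (a • Matrix.fromBlocks (1 : Matrix Unit Unit (Polynomial F)) 0 0 B)) : LocEqv A B := by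
  intro f hf
  haveI := ((Ideal.span_singleton_prime hf.ne_zero).mpr hf.prime)
  haveI : IsDomain (Localization (Ideal.span {f}).primeCompl) :=
    IsLocalization.isDomain_localization (Ideal.primeCompl_le_nonZeroDivisors (Ideal.span {f}))
  haveI : IsLocalRing (Localization (Ideal.span {f}).primeCompl) :=
    inferInstanceAs (IsLocalRing (Localization.AtPrime (Ideal.span {f})))
  have hmap : ∀ C : Matrix ι ι (Polynomial F),
      (a • Matrix.fromBlocks (1 : Matrix Unit Unit (Polynomial F)) 0 0 C).map
        (algebraMap (Polynomial F) (Localization (Ideal.span {f}).primeCompl)) =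
      (algebraMap (Polynomial F) (Localization (Ideal.span {f}).primeCompl) a) •
        Matrix.fromBlocks (1 : Matrix Unit Unit _) 0 0
          (C.map (algebraMap (Polynomial F) (Localization (Ideal.span {f}).primeCompl))) := by
    intro C
    ext (i | i) (j | j) <;> simp
  have h1 := h f hf
  rw [hmap, hmap] at h1
  have ha' : algebraMap (Polynomial F) (Localization (Ideal.span {f}).primeCompl) a ≠ 0 :=
    fun h0 => ha (inj hf (by rw [map_zero]; exact h0))
  exact (MEqv.of_smul ha' h1).symm.cancel

/-- The inductive step. -/
theorem step (ih : ∀ A B : Matrix ι ι (Polynomial F), LocEqv A B → MEqv A B)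
    (A B : Matrix (Unit ⊕ ι) (Unit ⊕ ι) (Polynomial F)) (h : LocEqv A B) : MEqv A B := by
  by_cases hA : A = 0
  · subst hA; rw [h.symm.eq_zero]; exact MEqv.refl _
  by_cases hB : B = 0
  · subst hB; exact absurd h.eq_zero hA
  obtain ⟨a, ha, A', hA'⟩ := MEqv.exists_normal hA
  obtain ⟨b, hb, B', hB'⟩ := MEqv.exists_normal hB
  have h1 := ((of_eqv hA').symm.trans h).trans (of_eqv hB')
  obtain ⟨u, rfl⟩ := associated_of_dvd_dvd h1.symm.dvd_corner h1.dvd_corner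
  have hB'' : MEqv B (a • Matrix.fromBlocks (1 : Matrix Unit Unit (Polynomial F)) 0 0 B') := by
    refine hB'.trans ?_
    rw [mul_comm, mul_smul]
    exact MEqv.smul_unit _ u.isUnit
  have h2 := ((of_eqv hA').symm.trans h).trans (of_eqv hB'')
  exact hA'.trans ((((ih _ _ (h2.cancel ha)).blocks).smul a).trans hB''.symm)

theorem eqv (n : ℕ) : ∀ A B : Matrix (Fin n) (Fin n) (Polynomial F), LocEqv A B → MEqv A B := by
  induction n with
  | zero =>
    intro A B _
    rw [Subsingleton.elim A B]; exact MEqv.refl _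
  | succ n ih =>
    intro A B h
    have e : Fin (n + 1) ≃ Unit ⊕ Fin n := Fintype.equivOfCardEq (by simp [add_comm])
    have h1 := (step ih _ _ (h.reindex e)).reindex e.symm
    simpa using h1

end LocEqv

/-- Two `n×n` matrices over `F[z]` are equivalent over `F[z]`
(i.e. `A = U·B·V` with `U`, `V` invertible over `F[z]`) if and only if for every
irreducible `f ∈ F[z]` their images are equivalent over the localization
`F[z]_f` of `F[z]` at the prime ideal generated by `f` (equivalently, at the
multiplicative set of polynomials relatively prime to `f`). -/
theorem equivalent_iff_locally_equivalent
    {F : Type*} [Field F] (n : ℕ) (hn : 1 ≤ n)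
    (A B : Matrix (Fin n) (Fin n) (Polynomial F)) :
    (∃ U V : Matrix (Fin n) (Fin n) (Polynomial F),
      IsUnit U ∧ IsUnit V ∧ A = U * B * V) ↔
    (∀ f : Polynomial F, ∀ hf : Irreducible f,
      ∃ U V : Matrix (Fin n) (Fin n)
        (Localization (@Ideal.primeCompl _ _ (Ideal.span {f})
          ((Ideal.span_singleton_prime hf.ne_zero).mpr hf.prime))),
        IsUnit U ∧ IsUnit V ∧
          A.map (algebraMap (Polynomial F) _) =
            U * B.map (algebraMap (Polynomial F) _) * V) := by
  exact ⟨fun h => LocEqv.of_eqv h, fun h => LocEqv.eqv n A B h⟩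
end

section
/- Let F be a field, n ≥ 1, ℓ ≥ 0, and let τ_0, …, τ_ℓ ∈ F be distinct with barycentric weights β_k = ∏_{j≠k} 1/(τ_k − τ_j). Let P(z) be any n×n matrix polynomial over F of degree at most ℓ, and set P_k = P(τ_k). Let L(z) be the n(ℓ+2) × n(ℓ+2) block pencil (block indices 0, …, ℓ+1) with block (0,0) = 0, blocks (0, 1+i) = −P_{ℓ−i}, blocks (1+i, 0) = β_{ℓ−i}·I_n, blocks (1+i, 1+i) = (z − τ_{ℓ−i})·I_n for 0 ≤ i ≤ ℓ, and other blocks 0. Then, without any invertibility assumption on the values P_k and without assuming P is regular, L(z) is equivalent over F[z] to diag(P(z), I_n, …, I_n) with ℓ+1 identity blocks: there exist unimodular matrix polynomials E(z), F(z) over F[z] with E(z)·L(z)·F(z) = diag(P(z), I_n, …, I_n). -/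
open Polynomial

/-- The explicit inverse of the scalar pencil of the constant polynomial `1`. -/
lemma scalar_inverse {F : Type*} [Field F] (ℓ : ℕ) (σ : Fin (ℓ + 1) → F)
    (hσ : Function.Injective σ) :
    ∃ V : Matrix (Fin (ℓ + 2)) (Fin (ℓ + 2)) (Polynomial F),
      IsUnit V.det ∧
      (∀ j : Fin (ℓ + 1), V j.succ 0 = - Lagrange.basis Finset.univ σ j) ∧
      (∀ (i : Fin (ℓ + 1)) (c : Fin (ℓ + 2)),
        C (Lagrange.nodalWeight Finset.univ σ i) * V 0 c + (X - C (σ i)) * V i.succ c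
          = if i.succ = c then 1 else 0) := by
  classical
  set b : Fin (ℓ + 1) → F := Lagrange.nodalWeight Finset.univ σ with hb
  set w : Polynomial F := Lagrange.nodal Finset.univ σ with hw
  let wi : Fin (ℓ + 1) → Polynomial F := fun i => Lagrange.nodal (Finset.univ.erase i) σ
  have hwi : ∀ i, (X - C (σ i)) * wi i = w := fun i =>
    (Lagrange.nodal_eq_mul_nodal_erase (Finset.mem_univ i)).symm
  have hbas : ∀ i, Lagrange.basis Finset.univ σ i = C (b i) * wi i := by
    intro i
    rw [Lagrange.basis_eq_prod_sub_inv_mul_nodal_div (Finset.mem_univ i),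
      ← Lagrange.nodal_erase_eq_nodal_div (Finset.mem_univ i)]
  have hsum : ∑ i, C (b i) * wi i = 1 := by
    rw [← Lagrange.sum_basis (s := Finset.univ) (v := σ) hσ.injOn Finset.univ_nonempty]
    exact Finset.sum_congr rfl fun i _ => (hbas i).symm
  have hdiv : ∀ j i : Fin (ℓ + 1), ∃ x : Polynomial F,
      (if j = i then 1 else 0) - C (b j) * wi i = (X - C (σ j)) * x := by
    intro j i
    change (X - C (σ j)) ∣ _
    rw [dvd_iff_isRoot, IsRoot.def]
    by_cases h : j = i
    · subst h
      rw [← hbas, eval_sub, Lagrange.eval_basis_self hσ.injOn (Finset.mem_univ j)]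
      simp
    · have : eval (σ j) (wi i) = 0 :=
        Lagrange.eval_nodal_at_node (Finset.mem_erase.2 ⟨h, Finset.mem_univ j⟩)
      simp [h, this]
  choose x hx using hdiv
  have hw0 : w ≠ 0 := Lagrange.nodal_ne_zero
  have hxs : ∀ i, ∑ j, x j i = 0 := by
    intro i
    apply (mul_right_inj' hw0).1
    rw [Finset.mul_sum, mul_zero]
    have h1 : ∀ j, w * x j i = (if j = i then wi j else 0) - (C (b j) * wi j) * wi i := by
      intro j
      have h2 : w * x j i = wi j * ((X - C (σ j)) * x j i) := by rw [← hwi j]; ring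
      rw [h2, ← hx]
      split_ifs <;> ring
    rw [Finset.sum_congr rfl fun j _ => h1 j, Finset.sum_sub_distrib, ← Finset.sum_mul, hsum]
    simp
  let V : Matrix (Fin (ℓ + 2)) (Fin (ℓ + 2)) (Polynomial F) := Matrix.of fun r c =>
    (Fin.cases (Fin.cases w wi c : Polynomial F)
      (fun j => (Fin.cases (- (C (b j) * wi j)) (fun i => x j i) c : Polynomial F)) r : Polynomial F)
  have hV3 : ∀ (i : Fin (ℓ + 1)) (c : Fin (ℓ + 2)),
        C (b i) * V 0 c + (X - C (σ i)) * V i.succ c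
          = if i.succ = c then 1 else 0 := by
    intro i c
    refine Fin.cases ?_ (fun k => ?_) c
    · simp only [V, Matrix.of_apply, Fin.cases_zero, Fin.cases_succ, Fin.succ_ne_zero, if_false]
      rw [← hwi i]; ring
    · simp only [V, Matrix.of_apply, Fin.cases_zero, Fin.cases_succ, Fin.succ_inj]
      rw [← hx]; ring
  let G : Matrix (Fin (ℓ + 2)) (Fin (ℓ + 2)) (Polynomial F) := Matrix.of fun r c =>
    (Fin.cases (Fin.cases 0 (fun _ => -1) c : Polynomial F)
      (fun i => (Fin.cases (C (b i)) (fun j => if i = j then X - C (σ i) else 0) c : Polynomial F)) r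
        : Polynomial F)
  have hGV : G * V = 1 := by
    ext1 r c
    rw [Matrix.mul_apply, Fin.sum_univ_succ, Matrix.one_apply]
    refine Fin.cases ?_ (fun i => ?_) r
    · refine Fin.cases ?_ (fun k => ?_) c
      · simp only [G, V, Matrix.of_apply, Fin.cases_zero, Fin.cases_succ]
        simp [hsum]
      · simp only [G, V, Matrix.of_apply, Fin.cases_zero, Fin.cases_succ]
        simp [hxs, (Fin.succ_ne_zero k).symm]
    · rw [← hV3 i c]
      simp only [G, Matrix.of_apply, Fin.cases_zero, Fin.cases_succ]
      simp
  refine ⟨V, ?_, ?_, hV3⟩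
  · have h := congrArg Matrix.det hGV
    rw [Matrix.det_mul, Matrix.det_one, mul_comm] at h
    exact IsUnit.of_mul_eq_one _ h
  · intro j
    rw [hbas]
    simp [V]

/-- For distinct nodes `τ_0, …, τ_ℓ` with barycentric weights `β_k`,
and ANY `n×n` matrix polynomial `P(z)` of degree at most `ℓ` with values
`P_k = P(τ_k)` (no invertibility or regularity assumption), the Lagrange-basis
companion pencil `L(z)` (blocks encoded on `Fin (ℓ+2) × Fin n`, block index first)
is equivalent over `F[z]` to `diag(P(z), I_n, …, I_n)` (`ℓ+1` identity blocks):
there exist unimodular matrix polynomials `E(z)`, `F(z)` with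
`E(z)·L(z)·F(z) = diag(P(z), I_n, …, I_n)`. -/
theorem lagrange_pencil_linearization_general
    {F : Type*} [Field F] (n ℓ : ℕ) (hn : 1 ≤ n)
    (τ : ℕ → F) (hτ : ∀ j ≤ ℓ, ∀ k ≤ ℓ, j ≠ k → τ j ≠ τ k)
    (β : ℕ → F)
    (hβ : ∀ k ≤ ℓ, β k = ∏ j ∈ (Finset.range (ℓ + 1)).erase k, (τ k - τ j)⁻¹)
    (P : Matrix (Fin n) (Fin n) (Polynomial F))
    (hdeg : ∀ s t : Fin n, (P s t).degree ≤ (ℓ : ℕ))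
    (L : Matrix (Fin (ℓ + 2) × Fin n) (Fin (ℓ + 2) × Fin n) (Polynomial F))
    (hL : ∀ r c : Fin (ℓ + 2), ∀ s t : Fin n, L (r, s) (c, t) =
      if r.val = 0 then
        (if c.val = 0 then 0
         else (-(P.map (eval (τ (ℓ - (c.val - 1))))).map C) s t)
      else if c.val = 0 then (if s = t then C (β (ℓ - (r.val - 1))) else 0)
      else if r = c then (if s = t then X - C (τ (ℓ - (r.val - 1))) else 0)
      else 0) :
    ∃ E Fm : Matrix (Fin (ℓ + 2) × Fin n) (Fin (ℓ + 2) × Fin n) (Polynomial F),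
      (∃ c : F, c ≠ 0 ∧ E.det = C c) ∧
      (∃ c : F, c ≠ 0 ∧ Fm.det = C c) ∧
      E * L * Fm = Matrix.of fun q r : Fin (ℓ + 2) × Fin n =>
        if q.1 = r.1 then
          (if q.1.val = 0 then P q.2 r.2 else if q.2 = r.2 then 1 else 0)
        else 0 := by
  classical
  let σ : Fin (ℓ + 1) → F := fun i => τ (ℓ - i.val)
  have hσ : Function.Injective σ := by
    intro i j h
    by_contra hij
    refine hτ (ℓ - i.val) (by omega) (ℓ - j.val) (by omega) ?_ h
    intro h'
    apply hij
    ext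
    omega
  have hb : ∀ i : Fin (ℓ + 1), β (ℓ - i.val) = Lagrange.nodalWeight Finset.univ σ i := by
    intro i
    rw [hβ _ (by omega), Lagrange.nodalWeight]
    symm
    refine Finset.prod_bij (fun j _ => ℓ - j.val) ?_ ?_ ?_ ?_
    · intro j hj
      have := Finset.ne_of_mem_erase hj
      rw [Finset.mem_erase, Finset.mem_range]
      refine ⟨fun h => this (by ext; omega), by omega⟩
    · intro j _ k _ h
      ext
      have h2 : ℓ - j.val = ℓ - k.val := h
      omega
    · intro k hk
      rw [Finset.mem_erase, Finset.mem_range] at hk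
      refine ⟨⟨ℓ - k, by omega⟩, ?_, by simp only; omega⟩
      rw [Finset.mem_erase]
      refine ⟨fun h => hk.1 ?_, Finset.mem_univ _⟩
      rw [← h]
      simp only
      omega
    · intro j _
      rfl
  obtain ⟨V, hVu, hV0, hV⟩ := scalar_inverse ℓ σ hσ
  have unit_const : ∀ p : Polynomial F, IsUnit p → ∃ c : F, c ≠ 0 ∧ p = C c := by
    intro p hp
    obtain ⟨c, hc, h⟩ := Polynomial.isUnit_iff.1 hp
    exact ⟨c, hc.ne_zero, h.symm⟩
  let K : Matrix (Fin (ℓ + 2) × Fin n) (Fin (ℓ + 2) × Fin n) (Polynomial F) :=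
    Matrix.kroneckerMap (fun a b => a * b) V 1
  have hK : IsUnit K.det := by
    have : K.det = _ := Matrix.det_kronecker V (1 : Matrix (Fin n) (Fin n) (Polynomial F))
    rw [this, Matrix.det_one, one_pow, mul_one]
    exact hVu.pow _
  obtain ⟨M, hM⟩ : ∃ M, M = L * K := ⟨_, rfl⟩
  have hMe : ∀ r s c t, M (r, s) (c, t) = ∑ k, L (r, s) (k, t) * V k c := by
    intro r s c t
    rw [hM, Matrix.mul_apply, Fintype.sum_prod_type]
    refine Finset.sum_congr rfl fun k _ => ?_
    rw [Finset.sum_eq_single t]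
    · simp [K]
    · intro u _ hu
      simp [K, hu]
    · simp
  have hM00 : ∀ s t, M (0, s) (0, t) = P s t := by
    intro s t
    rw [hMe, Fin.sum_univ_succ]
    have hP : P s t = Lagrange.interpolate Finset.univ σ (fun i => eval (σ i) (P s t)) := by
      refine Lagrange.eq_interpolate_of_eval_eq _ hσ.injOn ?_ (fun _ _ => rfl)
      refine lt_of_le_of_lt (hdeg s t) ?_
      rw [Finset.card_univ, Fintype.card_fin]
      exact_mod_cast Nat.lt_succ_self ℓ
    conv_rhs => rw [hP, Lagrange.interpolate_apply]
    have h0 : L (0, s) (0, t) = 0 := by simp [hL]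
    rw [h0, zero_mul, zero_add]
    refine Finset.sum_congr rfl fun j _ => ?_
    rw [hV0, hL]
    simp [σ]
  have hMs : ∀ (i : Fin (ℓ + 1)) s c t,
      M (i.succ, s) (c, t) =
        (1 : Matrix (Fin (ℓ + 2) × Fin n) (Fin (ℓ + 2) × Fin n) (Polynomial F)) (i.succ, s) (c, t) := by
    intro i s c t
    have h0 : L (i.succ, s) (0, t) =
        if s = t then C (Lagrange.nodalWeight Finset.univ σ i) else 0 := by
      rw [hL, ← hb]; simp
    have h1 : ∀ j : Fin (ℓ + 1), L (i.succ, s) (j.succ, t) =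
        if i = j then (if s = t then X - C (σ i) else 0) else 0 := by
      intro j
      rw [hL]; simp [σ]
    rw [hMe, Fin.sum_univ_succ, h0]
    simp only [h1, ite_mul, zero_mul, Finset.sum_ite_eq, Finset.mem_univ, if_true]
    rw [Matrix.one_apply]
    by_cases hst : s = t
    · simp only [hst, if_true, Prod.mk.injEq, and_true]
      exact hV i c
    · simp [hst]
  have hMs' : ∀ q r : Fin (ℓ + 2) × Fin n, q.1 ≠ 0 → M q r =
        (1 : Matrix (Fin (ℓ + 2) × Fin n) (Fin (ℓ + 2) × Fin n) (Polynomial F)) q r := by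
    rintro ⟨q, s⟩ ⟨c, t⟩ hq
    obtain ⟨i, rfl⟩ := Fin.exists_succ_eq.2 hq
    exact hMs i s c t
  obtain ⟨N, hN⟩ : ∃ N : Matrix (Fin (ℓ + 2) × Fin n) (Fin (ℓ + 2) × Fin n) (Polynomial F),
    ∀ q r, N q r = if q.1 = 0 ∧ r.1 ≠ 0 then M q r else 0 :=
      ⟨Matrix.of fun q r => if q.1 = 0 ∧ r.1 ≠ 0 then M q r else 0, fun _ _ => rfl⟩
  have hNN : N * N = 0 := by
    ext1 q r
    rw [Matrix.mul_apply, Matrix.zero_apply]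
    refine Finset.sum_eq_zero fun k _ => ?_
    rw [hN, hN]
    by_cases hk : k.1 = 0 <;> simp [hk]
  have hNM : N * M = N := by
    conv_rhs => rw [← Matrix.mul_one N]
    ext1 q r
    rw [Matrix.mul_apply, Matrix.mul_apply]
    refine Finset.sum_congr rfl fun k _ => ?_
    by_cases hk : k.1 = 0
    · rw [hN]; simp [hk]
    · rw [hMs' k r hk]
  have hE : IsUnit (1 - N).det := by
    have h : (1 - N) * (1 + N) = 1 := by
      rw [sub_mul, mul_add, mul_add, hNN]; simp
    have h := congrArg Matrix.det h
    rw [Matrix.det_mul, Matrix.det_one] at h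
    exact IsUnit.of_mul_eq_one _ h
  refine ⟨1 - N, K, unit_const _ hE, unit_const _ hK, ?_⟩
  rw [Matrix.mul_assoc, ← hM, sub_mul, hNM, Matrix.one_mul]
  ext1 ⟨q, s⟩ ⟨c, t⟩
  rw [Matrix.sub_apply, hN, Matrix.of_apply]
  by_cases hq : q = 0
  · subst hq
    by_cases hc : c = 0
    · subst hc
      simp [hM00]
    · simp [hc, Ne.symm hc]
  · have hq' : q.val ≠ 0 := fun h => hq (Fin.ext h)
    rw [hMs' _ _ hq, Matrix.one_apply]
    by_cases hqc : q = c <;> simp [hq, hqc]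
    subst hqc
    simp [hq]
end
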